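/- arXiv:2204.10671 — 2 statements merged into one kernel-verified Lean document; each statement's English description precedes it below -/
import Mathlib

section
/- There is a constant c such that for every integer q ≥ 2 there is a quantum OBDD of width at most c·q² representing the shifted equality function SEQ_q with bounded error, i.e. deciding every input correctly (accepting with probability ≥ 2/3 on 1-inputs and ≤ 1/3 on 0-inputs). In terms of the input length n = 2q + ⌈log₂ q⌉ the width is O(n²). -/
set_option maxHeartbeats 1000000
set_option linter.unusedVariables false
/-- `binVal l a = Σ_{j=1}^l a_j 2^{l-j}` (a₁ is the most significant bit). -/
def binVal (l : ℕ) (a : Fin l → Bool) : ℕ :=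
  ∑ j : Fin l, if a j then 2 ^ (l - 1 - (j : ℕ)) else 0
/-- A quantum OBDD of width `w` over `n` Boolean variables. -/
structure QOBDD (n w : ℕ) where
  ord : Equiv.Perm (Fin n)
  G : Fin n → Bool → Matrix.unitaryGroup (Fin w) ℂ
  start : Fin w
  acc : Finset (Fin w)

namespace QOBDD

noncomputable def finalVec {n w : ℕ} (M : QOBDD n w) (x : Fin n → Bool) : Fin w → ℂ :=
  (List.finRange n).foldl
    (fun ψ i => Matrix.mulVec (M.G i (x (M.ord i)) : Matrix (Fin w) (Fin w) ℂ) ψ)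
    (Pi.single M.start 1)

noncomputable def acceptProb {n w : ℕ} (M : QOBDD n w) (x : Fin n → Bool) : ℝ :=
  ∑ j ∈ M.acc, Complex.normSq (M.finalVec x j)

/-- `M` represents the total function `f` with margin `ε`. -/
def Represents {n w : ℕ} (M : QOBDD n w) (ε : ℝ) (f : (Fin n → Bool) → Bool) : Prop :=
  ∀ x, (f x = true → 1 / 2 + ε ≤ M.acceptProb x) ∧
       (f x = false → M.acceptProb x ≤ 1 / 2 - ε)

/-- `M` represents the partial function `F` with margin `ε`. -/
def RepresentsPartial {n w : ℕ} (M : QOBDD n w) (ε : ℝ)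
    (F : (Fin n → Bool) → Option Bool) : Prop :=
  ∀ x, (F x = some true → 1 / 2 + ε ≤ M.acceptProb x) ∧
       (F x = some false → M.acceptProb x ≤ 1 / 2 - ε)

/-- The QOBDD obtained by reordering: order `π`, matrices `G' i = G (ord⁻¹ (π i))`. -/
def reorder {n w : ℕ} (M : QOBDD n w) (π : Equiv.Perm (Fin n)) : QOBDD n w :=
  ⟨π, fun i => M.G (M.ord.symm (π i)), M.start, M.acc⟩

end QOBDD
/-- The shift `bin(s_1,…,s_l)` encoded in the last `l = ⌈log₂ q⌉` bits. -/
def seqShift (q : ℕ) (x : Fin (2 * q + Nat.clog 2 q) → Bool) : ℕ :=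
  binVal (Nat.clog 2 q) (fun j => x ⟨2 * q + (j : ℕ), by have := j.isLt; omega⟩)

/-- The shifted equality function `SEQ_q`. -/
def SEQ (q : ℕ) (x : Fin (2 * q + Nat.clog 2 q) → Bool) : Bool :=
  decide (∀ i : Fin q,
    x ⟨(i : ℕ), by have := i.isLt; omega⟩ =
      x ⟨q + (((i : ℕ) + seqShift q x) % q), by
          have h := Nat.mod_lt ((i : ℕ) + seqShift q x) i.pos
          omega⟩)
open scoped Matrix Kronecker

/-- The character of `(ℤ/2)^ι` attached to `d`. -/
def boolChar {ι : Type*} [Fintype ι] (d r : ι → Bool) : ℝ :=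
  ∏ i, if (d i && r i) = true then -1 else 1

theorem boolChar_eq_or {ι : Type*} [Fintype ι] (d r : ι → Bool) :
    boolChar d r = 1 ∨ boolChar d r = -1 := by
  unfold boolChar
  refine Finset.prod_induction _ (fun a : ℝ => a = 1 ∨ a = -1) ?_ (Or.inl rfl) ?_
  · rintro a b (rfl | rfl) (rfl | rfl) <;> norm_num
  · intro i _
    split_ifs <;> simp

theorem sum_boolChar_eq_zero {ι : Type*} [Fintype ι] [DecidableEq ι] {d : ι → Bool}
    (hd : ∃ i, d i = true) : ∑ r, boolChar d r = 0 := by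
  obtain ⟨i, hi⟩ := hd
  have h := Fintype.prod_sum (fun (i : ι) (b : Bool) =>
    if (d i && b) = true then (-1 : ℝ) else 1)
  unfold boolChar
  rw [← h]
  exact Finset.prod_eq_zero (Finset.mem_univ i) (by simp [hi])

theorem sum_prod_affine_boolChar {ι κ : Type*} [Fintype ι] [DecidableEq ι] [Fintype κ]
    [DecidableEq κ] {d : ι → Bool} (hd : ∃ i, d i = true) (a b : ℝ) :
    ∑ R : κ → ι → Bool, ∏ j, (a + b * boolChar d (R j)) =
      (2 ^ Fintype.card ι * a) ^ Fintype.card κ := by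
  have h := Fintype.prod_sum (fun (_ : κ) (r : ι → Bool) => a + b * boolChar d r)
  rw [← h]
  simp [Finset.sum_add_distrib, ← Finset.mul_sum, sum_boolChar_eq_zero hd]

theorem two_rpow_sum_boolChar {ι κ : Type*} [Fintype ι] [Fintype κ] (d : ι → Bool)
    (R : κ → ι → Bool) {ε : ℝ} (hε : ε = 1 ∨ ε = -1) :
    (2 : ℝ) ^ (ε * ∑ j, boolChar d (R j)) = ∏ j, (5 / 4 + ε * (3 / 4) * boolChar d (R j)) := by
  rw [Finset.mul_sum, Real.rpow_sum_of_pos (by norm_num)]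
  refine Finset.prod_congr rfl fun j _ => ?_
  rcases hε with rfl | rfl <;> rcases boolChar_eq_or d (R j) with h | h <;> rw [h] <;>
    norm_num [Real.rpow_neg_one]

/-- Random linear code with relative distance bounded away from `0` and `1`. -/
theorem exists_balanced_code {q : ℕ} (hq : 1 ≤ q) :
    ∃ R : Fin (16 * q) → Fin q → Bool, ∀ d : Fin q → Bool, (∃ i, d i = true) →
      |∑ j, boolChar d (R j)| ≤ 8 * q := by
  classical
  let D : Finset (Fin q → Bool) := Finset.univ.filter fun d => ∃ i, d i = true
  let F : (Fin (16 * q) → Fin q → Bool) → (Fin q → Bool) → ℝ := fun R d =>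
    (2 : ℝ) ^ (1 * ∑ j, boolChar d (R j)) + (2 : ℝ) ^ (-1 * ∑ j, boolChar d (R j))
  have hF : ∀ R d, 0 ≤ F R d := fun R d => by positivity
  have hcard : (D.card : ℝ) ≤ 2 ^ q := by
    have : D.card ≤ 2 ^ q := (Finset.card_filter_le _ _).trans (by simp)
    exact_mod_cast this
  have htotal : ∑ R, ∑ d ∈ D, F R d ≤
      ∑ R : Fin (16 * q) → Fin q → Bool, (2 : ℝ) ^ (8 * q) := by
    rw [Finset.sum_comm]
    have h1 : ∀ d ∈ D, ∑ R, F R d = 2 * (2 ^ q * (5 / 4)) ^ (16 * q) := by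
      intro d hd
      have hd : ∃ i, d i = true := by simpa [D] using hd
      simp only [F, two_rpow_sum_boolChar d _ (Or.inl rfl),
        two_rpow_sum_boolChar d _ (Or.inr rfl), Finset.sum_add_distrib,
        sum_prod_affine_boolChar hd]
      simp only [Fintype.card_fin]
      ring
    rw [Finset.sum_congr rfl h1]
    simp only [Finset.sum_const, nsmul_eq_mul, Finset.card_univ, Fintype.card_pi,
      Fintype.card_bool, Finset.prod_const, Fintype.card_fin]
    have h2 : (2 : ℝ) * ((2 * (5 / 4) ^ 16) ^ q) ≤ (2 ^ 8) ^ q := by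
      have h3 : (2 : ℝ) ≤ 2 ^ q := by
        simpa using pow_le_pow_right₀ (one_le_two : (1 : ℝ) ≤ 2) hq
      calc (2 : ℝ) * ((2 * (5 / 4) ^ 16) ^ q) ≤ 2 ^ q * ((2 * (5 / 4) ^ 16) ^ q) := by gcongr
        _ = (2 * (2 * (5 / 4) ^ 16)) ^ q := (mul_pow _ _ _).symm
        _ ≤ (2 ^ 8) ^ q := by gcongr; norm_num
    calc (D.card : ℝ) * (2 * (2 ^ q * (5 / 4)) ^ (16 * q))
        ≤ 2 ^ q * (2 * (2 ^ q * (5 / 4)) ^ (16 * q)) := by gcongr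
      _ = (2 ^ q) ^ (16 * q) * (2 * ((2 * (5 / 4) ^ 16) ^ q)) := by
          rw [mul_pow, mul_pow, ← pow_mul (5 / 4 : ℝ) 16 q]; ring
      _ ≤ (2 ^ q) ^ (16 * q) * (2 ^ 8) ^ q := by gcongr
      _ = _ := by rw [← pow_mul 2 8 q]; push_cast; ring
  obtain ⟨R, -, hR⟩ := Finset.exists_le_of_sum_le Finset.univ_nonempty htotal
  refine ⟨R, fun d hd => ?_⟩
  have h : F R d ≤ 2 ^ (8 * q) :=
    (Finset.single_le_sum (fun d _ => hF R d) (by simpa [D] using hd)).trans hR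
  have key : ∀ s : ℝ, (2 : ℝ) ^ s ≤ 2 ^ (8 * q) → s ≤ 8 * q := by
    intro s hs
    rw [← Real.rpow_natCast, Real.rpow_le_rpow_left_iff one_lt_two] at hs
    simpa using hs
  have hpos : ∀ s : ℝ, 0 < (2 : ℝ) ^ s := fun s => Real.rpow_pos_of_pos two_pos s
  have hp := key _ ((le_add_of_nonneg_right (hpos _).le).trans h)
  have hm := key _ ((le_add_of_nonneg_left (hpos _).le).trans h)
  rw [abs_le]
  constructor <;> linarith

theorem list_prod_telescope {G : Type*} [Group G] : ∀ (n : ℕ) (C : ℕ → G) (U : Fin n → G),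
    ((List.finRange n).map fun v : Fin n => C v * U v * (C (v + 1))⁻¹).prod =
      C 0 * ((List.finRange n).map U).prod * (C n)⁻¹
  | 0, C, U => by simp
  | n + 1, C, U => by
    have ih := list_prod_telescope n (fun k => C (k + 1)) (fun v => U v.succ)
    simp only [List.finRange_succ, List.map_cons, List.map_map, List.prod_cons,
      Function.comp_def, Fin.val_succ, Fin.val_zero] at ih ⊢
    rw [ih]
    simp [mul_assoc]

theorem foldr_mulVec {w α : Type*} [Fintype w] [DecidableEq w]
    (g : α → Matrix.unitaryGroup w ℂ) (ψ : w → ℂ) (L : List α) :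
    L.foldr (fun v φ => (g v : Matrix w w ℂ) *ᵥ φ) ψ =
      ((L.map g).prod : Matrix w w ℂ) *ᵥ ψ := by
  induction L with
  | nil => simp
  | cons v L ih => simp [ih, Matrix.mulVec_mulVec]

/-- Relabelling the basis of a unitary matrix. -/
def unitaryReindex {w Q : Type*} [Fintype w] [DecidableEq w] [Fintype Q] [DecidableEq Q]
    (e : w ≃ Q) (U : Matrix.unitaryGroup Q ℂ) : Matrix.unitaryGroup w ℂ :=
  ⟨(U : Matrix Q Q ℂ).submatrix e e, by
    rw [Matrix.mem_unitaryGroup_iff, Matrix.star_eq_conjTranspose, Matrix.conjTranspose_submatrix,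
      Matrix.submatrix_mul_equiv, ← Matrix.star_eq_conjTranspose,
      Matrix.mem_unitaryGroup_iff.1 U.2, Matrix.submatrix_one_equiv]⟩

theorem exists_qobdd {n w : ℕ} {Q : Type*} [Fintype Q] [DecidableEq Q] (hn : 0 < n)
    (e : Fin w ≃ Q) (U : Fin n → Bool → Matrix.unitaryGroup Q ℂ)
    (A B : Matrix.unitaryGroup Q ℂ) (q₀ : Q) (acc : Finset Q) :
    ∃ M : QOBDD n w, ∀ x, M.acceptProb x = ∑ p ∈ acc, Complex.normSq
      (((B : Matrix Q Q ℂ) *ᵥ (List.finRange n).foldr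
        (fun v φ => (U v (x v) : Matrix Q Q ℂ) *ᵥ φ)
        ((A : Matrix Q Q ℂ) *ᵥ Pi.single q₀ 1)) p) := by
  let C : ℕ → Matrix.unitaryGroup Q ℂ := fun k => if k = 0 then B else if k = n then A⁻¹ else 1
  let V : Fin n → Bool → Matrix.unitaryGroup Q ℂ := fun v b => C v * U v b * (C (v + 1))⁻¹
  refine ⟨⟨Fin.revPerm, fun i b => unitaryReindex e (V i.rev b), e.symm q₀,
    acc.map e.symm.toEmbedding⟩, fun x => ?_⟩
  have hrel : ∀ L : List (Fin n),
      L.foldr (fun v φ => (unitaryReindex e (V v (x v)) : Matrix (Fin w) (Fin w) ℂ) *ᵥ φ)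
        (Pi.single (e.symm q₀) 1) =
      (L.foldr (fun v φ => (V v (x v) : Matrix Q Q ℂ) *ᵥ φ) (Pi.single q₀ 1)) ∘ e := by
    intro L
    induction L with
    | nil =>
      ext i
      simp [Pi.single_apply, Equiv.eq_symm_apply]
    | cons v L ih =>
      rw [List.foldr_cons, ih]
      simp only [unitaryReindex, Matrix.submatrix_mulVec_equiv, Function.comp_assoc,
        Equiv.self_comp_symm, Function.comp_id, List.foldr_cons]
  have hC0 : C 0 = B := by simp [C]
  have hCn : (C n)⁻¹ = A := by simp [C, hn.ne']
  have hfin : (List.finRange n).foldr (fun v φ => (V v (x v) : Matrix Q Q ℂ) *ᵥ φ)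
      (Pi.single q₀ 1) = (B : Matrix Q Q ℂ) *ᵥ (List.finRange n).foldr
        (fun v φ => (U v (x v) : Matrix Q Q ℂ) *ᵥ φ)
        ((A : Matrix Q Q ℂ) *ᵥ Pi.single q₀ 1) := by
    rw [foldr_mulVec (fun v => V v (x v)), foldr_mulVec (fun v => U v (x v)),
      list_prod_telescope n C fun v => U v (x v), hC0, hCn, Matrix.mulVec_mulVec,
      Matrix.mulVec_mulVec]
    rfl
  unfold QOBDD.acceptProb
  simp only [Finset.sum_map]
  refine Finset.sum_congr rfl fun p _ => ?_
  rw [← hfin]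
  have h := congrFun (hrel (List.finRange n)) (e.symm p)
  simp only [Function.comp_apply, Equiv.apply_symm_apply] at h
  rw [← h]
  unfold QOBDD.finalVec
  have hr : List.finRange n = ((List.finRange n).map Fin.rev).reverse := by
    rw [← List.finRange_reverse, List.reverse_reverse]
  conv_rhs => rw [hr, List.foldr_reverse, List.foldl_map]
  rfl

/-- A unitary matrix whose first row and first column are uniform. -/
theorem exists_unitary_uniform (t : ℕ) [NeZero t] : ∃ H : Matrix.unitaryGroup (Fin t) ℂ,
    ∀ j, (H : Matrix (Fin t) (Fin t) ℂ) j 0 = ((√t : ℝ) : ℂ)⁻¹ ∧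
      (H : Matrix (Fin t) (Fin t) ℂ) 0 j = ((√t : ℝ) : ℂ)⁻¹ := by
  set u : ℝ := (√t)⁻¹ with hu
  have ht : (0 : ℝ) < t := by exact_mod_cast Nat.pos_of_neZero t
  have hupos : 0 < u := by positivity
  have huu : t * (u * u) = 1 := by
    rw [hu, ← mul_inv, Real.mul_self_sqrt ht.le]
    field_simp
  let v : Fin t → ℝ := fun j => (if j = 0 then 1 else 0) + u
  have hvv : ∑ j, v j * v j = 2 * (1 + u) := by
    simp only [v, mul_add, add_mul, Finset.sum_add_distrib]
    simp [huu]
    ring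
  let h : Fin t → Fin t → ℝ := fun i j => (1 + u)⁻¹ * (v i * v j) - if i = j then 1 else 0
  have hmul : ∀ i k, ∑ j, h i j * h k j = if i = k then 1 else 0 := by
    intro i k
    have : ∀ j, h i j * h k j = ((1 + u)⁻¹ * (1 + u)⁻¹ * v i * v k) * (v j * v j)
        - (if k = j then (1 + u)⁻¹ * (v i * v j) else 0)
        - (if i = j then (1 + u)⁻¹ * (v k * v j) else 0)
        + (if i = j then (if k = j then 1 else 0) else 0) := by
      intro j
      simp only [h]
      split_ifs <;> ring
    simp only [this, Finset.sum_add_distrib, Finset.sum_sub_distrib, ← Finset.mul_sum, hvv]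
    simp only [Finset.sum_ite_eq, Finset.mem_univ, if_true, eq_comm (a := k) (b := i)]
    field_simp
    ring
  refine ⟨⟨Matrix.of fun i j => (h i j : ℂ), ?_⟩, fun j => ?_⟩
  · rw [Matrix.mem_unitaryGroup_iff]
    ext i k
    simp only [Matrix.mul_apply, Matrix.star_apply, Matrix.of_apply, Complex.star_def,
      Complex.conj_ofReal, Matrix.one_apply]
    rw [← Complex.ofReal_one, ← Complex.ofReal_zero, ← apply_ite Complex.ofReal, ← hmul i k]
    push_cast
    rfl
  · have hj : h j 0 = u := by
      simp only [h, v]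
      split_ifs <;> field_simp <;> simp
    have hj' : h 0 j = u := by
      simp only [h, v, eq_comm (a := (0 : Fin t))]
      split_ifs <;> field_simp <;> simp
    simp only [Matrix.of_apply, hj, hj', hu]
    simp

/-- A monomial unitary: permute the basis by `σ`, then multiply by the phases `s`. -/
theorem exists_unitary_monomial {Q : Type*} [Fintype Q] [DecidableEq Q] (σ : Equiv.Perm Q)
    (s : Q → ℂ) (hs : ∀ p, s p * star (s p) = 1) : ∃ U : Matrix.unitaryGroup Q ℂ,
    ∀ ψ p, ((U : Matrix Q Q ℂ) *ᵥ ψ) p = s p * ψ (σ p) := by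
  refine ⟨⟨Matrix.of fun p p' => if σ p = p' then s p else 0, ?_⟩, fun ψ p => ?_⟩
  · rw [Matrix.mem_unitaryGroup_iff]
    ext i k
    simp only [Matrix.mul_apply, Matrix.star_apply, Matrix.of_apply, Matrix.one_apply, ite_mul,
      zero_mul, Finset.sum_ite_eq, Finset.mem_univ, if_true, EmbeddingLike.apply_eq_iff_eq]
    by_cases hik : i = k
    · subst hik
      simpa using hs i
    · simp [hik, Ne.symm hik]
  · simp [Matrix.mulVec, dotProduct]

theorem exists_unitary_one_kronecker {a b : Type*} [Fintype a] [DecidableEq a] [Fintype b]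
    [DecidableEq b] (H : Matrix.unitaryGroup b ℂ) : ∃ K : Matrix.unitaryGroup (a × b) ℂ,
    ∀ ψ p, ((K : Matrix (a × b) (a × b) ℂ) *ᵥ ψ) p =
      ∑ j, (H : Matrix b b ℂ) p.2 j * ψ (p.1, j) := by
  refine ⟨⟨(1 : Matrix a a ℂ) ⊗ₖ (H : Matrix b b ℂ),
    Matrix.kronecker_mem_unitary (one_mem _) H.2⟩, fun ψ p => ?_⟩
  simp [Matrix.mulVec, dotProduct, Fintype.sum_prod_type, Matrix.one_apply]

/-- Running controlled shifts of a register `a : α` followed by sign flips controlled by `a`. -/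
theorem foldr_shift_phase {α κ : Type*} [AddCommGroup α] [DecidableEq α] {n : ℕ} (m : ℕ)
    (wt : Fin n → α) (sgn : Fin n → α → κ → ℂ) (hwt : ∀ v : Fin n, (v : ℕ) < m → wt v = 0)
    (hsgn : ∀ v : Fin n, m ≤ (v : ℕ) → ∀ a j, sgn v a j = 1)
    (op : Fin n → (α × κ → ℂ) → α × κ → ℂ)
    (hop : ∀ v ψ a j, op v ψ (a, j) = sgn v a j * ψ (a - wt v, j))
    (c : ℂ) (ψ₀ : α × κ → ℂ) (h₀ : ∀ a j, ψ₀ (a, j) = if a = 0 then c else 0)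
    (L : List (Fin n)) (hL : L.Pairwise (· < ·)) (a : α) (j : κ) :
    L.foldr op ψ₀ (a, j) =
      if a = (L.map wt).sum then c * (L.map fun v => sgn v a j).prod else 0 := by
  induction L generalizing a with
  | nil => simp [h₀]
  | cons v L ih =>
    rw [List.pairwise_cons] at hL
    rw [List.foldr_cons, hop, ih hL.2]
    simp only [List.map_cons, List.sum_cons, List.prod_cons, sub_eq_iff_eq_add']
    split_ifs with h
    · rcases lt_or_ge (v : ℕ) m with hv | hv
      · rw [hwt v hv, sub_zero]
        ring
      · have h1 : ∀ b, (L.map fun v => sgn v b j) = L.map fun _ => (1 : ℂ) := fun b =>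
          List.map_congr_left fun u hu => hsgn u (hv.trans (hL.1 u hu).le) b j
        rw [h1, h1]
        ring
    · simp

theorem prod_univ_two_mul {M : Type*} [CommMonoid M] (q : ℕ) (f : Fin (2 * q) → M) :
    ∏ i, f i = (∏ i : Fin q, f ⟨i, by omega⟩) * ∏ i : Fin q, f ⟨q + i, by omega⟩ := by
  rw [← (finCongr (two_mul q).symm).prod_comp f, Fin.prod_univ_add]
  rfl

theorem bijective_add_mod {q : ℕ} (S : ℕ) :
    Function.Bijective fun i : Fin q =>
      (⟨((i : ℕ) + S) % q, Nat.mod_lt _ i.pos⟩ : Fin q) := by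
  refine Finite.injective_iff_bijective.1 fun i k h => ?_
  have h : (i : ℕ) + S ≡ k + S [MOD q] := congrArg Fin.val h
  exact Fin.ext ((h.add_right_cancel' S).eq_of_lt_of_lt i.2 k.2)

/-- The register increment triggered by variable `v`. -/
def seqWeight (q : ℕ) (v : Fin (2 * q + Nat.clog 2 q)) : ZMod q :=
  if (v : ℕ) < 2 * q then 0 else ((2 ^ (2 * q + Nat.clog 2 q - 1 - v) : ℕ) : ZMod q)

/-- The code coordinate addressed by variable `v` when the register holds `a`. -/
def seqCoord (q : ℕ) (v : Fin (2 * q + Nat.clog 2 q)) (a : ZMod q) : ZMod q :=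
  if (v : ℕ) < q then ((v : ℕ) : ZMod q) else (((v : ℕ) - q : ℕ) : ZMod q) - a

/-- The sign attached by variable `v` to code position `r` when the register holds `a`. -/
def seqSign (q : ℕ) [NeZero q] (r : Fin q → Bool) (v : Fin (2 * q + Nat.clog 2 q)) (a : ZMod q) :
    ℝ :=
  if (v : ℕ) < 2 * q ∧ r ⟨(seqCoord q v a).val, ZMod.val_lt _⟩ = true then -1 else 1

/-- The mismatch vector of the shifted comparison. -/
def seqDiff (q : ℕ) (x : Fin (2 * q + Nat.clog 2 q) → Bool) (i : Fin q) : Bool :=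
  xor (x ⟨(i : ℕ), by have := i.isLt; omega⟩)
    (x ⟨q + (((i : ℕ) + seqShift q x) % q), by
      have h := Nat.mod_lt ((i : ℕ) + seqShift q x) i.pos
      omega⟩)

theorem SEQ_eq_true_iff (q : ℕ) (x : Fin (2 * q + Nat.clog 2 q) → Bool) :
    SEQ q x = true ↔ ∀ i, seqDiff q x i = false := by
  simp [SEQ, seqDiff]

theorem sum_seqWeight (q : ℕ) (x : Fin (2 * q + Nat.clog 2 q) → Bool) :
    (∑ v, if x v = true then seqWeight q v else 0) = (seqShift q x : ZMod q) := by
  rw [Fin.sum_univ_add]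
  have h1 : ∀ i : Fin (2 * q), (if x (Fin.castAdd (Nat.clog 2 q) i) = true then
      seqWeight q (Fin.castAdd (Nat.clog 2 q) i) else 0) = 0 := by
    intro i
    simp [seqWeight]
  simp only [h1, Finset.sum_const_zero, zero_add, seqShift, binVal, Nat.cast_sum]
  refine Finset.sum_congr rfl fun j _ => ?_
  have h2 : 2 * q + Nat.clog 2 q - 1 - (2 * q + (j : ℕ)) = Nat.clog 2 q - 1 - j := by omega
  change _ = (((if x (Fin.natAdd (2 * q) j) = true then
    2 ^ (Nat.clog 2 q - 1 - (j : ℕ)) else 0 : ℕ)) : ZMod q)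
  simp [seqWeight, h2]

theorem prod_seqSign (q : ℕ) [NeZero q] (r : Fin q → Bool)
    (x : Fin (2 * q + Nat.clog 2 q) → Bool) :
    (∏ v, if x v = true then seqSign q r v (seqShift q x) else 1) =
      boolChar (seqDiff q x) r := by
  rw [Fin.prod_univ_add, prod_univ_two_mul]
  have h1 : ∀ i : Fin (Nat.clog 2 q), (if x (Fin.natAdd (2 * q) i) = true then
      seqSign q r (Fin.natAdd (2 * q) i) (seqShift q x) else 1) = 1 := by
    intro i
    simp [seqSign]
  simp only [h1, Finset.prod_const_one, mul_one]
  rw [mul_comm, ← (bijective_add_mod (seqShift q x)).prod_comp, ← Finset.prod_mul_distrib, boolChar]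
  refine Finset.prod_congr rfl fun i _ => ?_
  have hval : ((i : ℕ) : ZMod q).val = i := ZMod.val_natCast_of_lt i.2
  have hx : seqSign q r (Fin.castAdd _ ⟨(i : ℕ), by omega⟩) (seqShift q x) =
      if r i = true then -1 else 1 := by
    have h2 : (i : ℕ) < 2 * q := by omega
    simp [seqSign, seqCoord, hval, h2]
  have hm := Nat.mod_lt ((i : ℕ) + seqShift q x) i.pos
  have hy : seqSign q r (Fin.castAdd _ ⟨q + ((i : ℕ) + seqShift q x) % q, by omega⟩)
      (seqShift q x) = if r i = true then -1 else 1 := by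
    have h2 : q + ((i : ℕ) + seqShift q x) % q < 2 * q := by omega
    simp [seqSign, seqCoord, hval, h2]
  simp only [Fin.castAdd_mk] at hx hy ⊢
  rw [hx, hy]
  simp only [seqDiff]
  by_cases hb : x ⟨(i : ℕ), by omega⟩ = true <;>
    by_cases hc : x ⟨q + ((i : ℕ) + seqShift q x) % q, by omega⟩ = true <;>
    by_cases hr : r i = true <;> simp [hb, hc, hr]

theorem exists_seq_qobdd (q : ℕ) [NeZero q] (t : ℕ) [NeZero t] (R : Fin t → Fin q → Bool) :
    ∃ M : QOBDD (2 * q + Nat.clog 2 q) (q * t), ∀ x,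
      M.acceptProb x = ((∑ j, boolChar (seqDiff q x) (R j)) / t) ^ 2 := by
  have hq : 0 < q := Nat.pos_of_neZero q
  have hU : ∀ (v : Fin (2 * q + Nat.clog 2 q)) (b : Bool),
      ∃ U : Matrix.unitaryGroup (ZMod q × Fin t) ℂ, ∀ ψ a j,
        ((U : Matrix (ZMod q × Fin t) (ZMod q × Fin t) ℂ) *ᵥ ψ) (a, j) =
          ((if b = true then seqSign q (R j) v a else 1 : ℝ) : ℂ) *
            ψ (a - (if b = true then seqWeight q v else 0), j) := by
    intro v b
    obtain ⟨U, hU⟩ := exists_unitary_monomial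
      ((Equiv.subRight (if b = true then seqWeight q v else 0)).prodCongr (Equiv.refl (Fin t)))
      (fun p => ((if b = true then seqSign q (R p.2) v p.1 else 1 : ℝ) : ℂ)) (by
        intro p
        unfold seqSign
        split_ifs <;> simp)
    exact ⟨U, fun ψ a j => hU ψ (a, j)⟩
  choose U hU using hU
  obtain ⟨H, hH⟩ := exists_unitary_uniform t
  obtain ⟨K, hK⟩ := exists_unitary_one_kronecker (a := ZMod q) H
  have e : Fin (q * t) ≃ ZMod q × Fin t := Fintype.equivOfCardEq (by simp [ZMod.card])
  obtain ⟨M, hM⟩ := exists_qobdd (by omega) e U K K (0, 0)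
    (Finset.univ.filter fun p => p.2 = 0)
  refine ⟨M, fun x => ?_⟩
  have hst := foldr_shift_phase (2 * q) (fun v => if x v = true then seqWeight q v else 0)
    (fun v a j => ((if x v = true then seqSign q (R j) v a else 1 : ℝ) : ℂ))
    (fun v hv => by simp [seqWeight, hv])
    (fun v hv a j => by simp [seqSign, not_lt.2 hv])
    (fun v φ => (U v (x v) : Matrix (ZMod q × Fin t) (ZMod q × Fin t) ℂ) *ᵥ φ)
    (fun v ψ a j => hU v (x v) ψ a j) ((√t : ℝ) : ℂ)⁻¹
    ((K : Matrix (ZMod q × Fin t) (ZMod q × Fin t) ℂ) *ᵥ Pi.single (0, 0) 1)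
    (fun a j => by
      rw [hK]
      by_cases ha : a = 0
      · simp [ha, Pi.single_apply, hH]
      · simp [ha])
    (List.finRange _) (List.pairwise_lt_finRange _)
  simp only [← Fin.sum_univ_def, ← Fin.prod_univ_def, sum_seqWeight] at hst
  have ht : (0 : ℝ) < t := by exact_mod_cast Nat.pos_of_neZero t
  have hs : (((√t : ℝ) : ℂ)⁻¹) * ((√t : ℝ) : ℂ)⁻¹ = ((t : ℝ) : ℂ)⁻¹ := by
    rw [← mul_inv, ← Complex.ofReal_mul, Real.mul_self_sqrt ht.le]
  have hamp : ∀ a : ZMod q,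
      ((K : Matrix (ZMod q × Fin t) (ZMod q × Fin t) ℂ) *ᵥ (List.finRange _).foldr
        (fun v φ => (U v (x v) : Matrix (ZMod q × Fin t) (ZMod q × Fin t) ℂ) *ᵥ φ)
        ((K : Matrix (ZMod q × Fin t) (ZMod q × Fin t) ℂ) *ᵥ Pi.single (0, 0) 1)) (a, 0) =
      if a = (seqShift q x : ZMod q) then
        (((∑ j, boolChar (seqDiff q x) (R j)) / t : ℝ) : ℂ) else 0 := by
    intro a
    rw [hK]
    simp only [hst, hH]
    split_ifs with ha
    · subst ha
      simp only [← Complex.ofReal_prod, prod_seqSign, ← mul_assoc, hs]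
      rw [← Finset.mul_sum, ← Complex.ofReal_sum, ← Complex.ofReal_inv, ← Complex.ofReal_mul,
        div_eq_inv_mul]
    · simp
  rw [hM, Finset.sum_filter, Fintype.sum_prod_type]
  simp only [Finset.sum_ite_eq', Finset.mem_univ, if_true, hamp]
  rw [Finset.sum_eq_single (seqShift q x : ZMod q)]
  · simp only [if_true, Complex.normSq_ofReal]
    ring
  · intro a _ ha
    simp [ha]
  · simp

/-- `SEQ_q` has a bounded-error QOBDD of width `O(q²)`. -/
theorem stmt12 :
    ∃ c : ℕ, 0 < c ∧
      ∀ q : ℕ, 2 ≤ q →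
        ∃ W : ℕ, W ≤ c * q ^ 2 ∧
          ∃ M : QOBDD (2 * q + Nat.clog 2 q) W,
            ∀ x, (SEQ q x = true → 2 / 3 ≤ M.acceptProb x) ∧
                 (SEQ q x = false → M.acceptProb x ≤ 1 / 3) := by
  refine ⟨16, by norm_num, fun q hq => ⟨q * (16 * q), le_of_eq (by ring), ?_⟩⟩
  have : NeZero q := ⟨by omega⟩
  have : NeZero (16 * q) := ⟨by omega⟩
  have hq0 : (0 : ℝ) < q := by exact_mod_cast (by omega : 0 < q)
  obtain ⟨R, hR⟩ := exists_balanced_code (q := q) (by omega)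
  obtain ⟨M, hM⟩ := exists_seq_qobdd q (16 * q) R
  refine ⟨M, fun x => ⟨fun h => ?_, fun h => ?_⟩⟩
  · rw [SEQ_eq_true_iff] at h
    have h1 : ∀ j, boolChar (seqDiff q x) (R j) = 1 := fun j => by simp [boolChar, h]
    have h2 : ((16 * q : ℕ) : ℝ) ≠ 0 := by positivity
    rw [hM]
    simp only [h1, Finset.sum_const, Finset.card_univ, Fintype.card_fin, nsmul_eq_mul, mul_one]
    rw [div_self h2]
    norm_num
  · have hd : ∃ i, seqDiff q x i = true := by
      by_contra! hne
      have := (SEQ_eq_true_iff q x).2 fun i => by simpa using hne i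
      simp [this] at h
    have h1 : |(∑ j, boolChar (seqDiff q x) (R j)) / ((16 * q : ℕ) : ℝ)| ≤ 1 / 2 := by
      rw [abs_div, abs_of_pos (a := ((16 * q : ℕ) : ℝ)) (by positivity),
        div_le_iff₀ (by positivity)]
      push_cast
      linarith [hR _ hd]
    rw [hM, ← sq_abs]
    calc |(∑ j, boolChar (seqDiff q x) (R j)) / ((16 * q : ℕ) : ℝ)| ^ 2 ≤ (1 / 2) ^ 2 := by
          gcongr
      _ ≤ 1 / 3 := by norm_num
end

section
/- There is a constant c such that for all integers k ≥ 1 and m ≥ 2 the following holds. Let n = 2m⌈log₂ m⌉ be the input length of PJ_{2k−1,m} and N = n(⌈log₂ n⌉+1). Then there exists a total Boolean function g : {0,1}^N → {0,1} that agrees with the partial function ord(PJ_{2k−1,m}) on its domain and is representable by a deterministic 2kOBDD of width at most c·m²·n; in particular the width is O(N³). -/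
set_option maxHeartbeats 1000000
set_option linter.unusedVariables false
/-- A deterministic kOBDD of width `w` over `n` variables: `k` layers reading in order `ord`. -/
structure KOBDD (k n w : ℕ) where
  ord : Equiv.Perm (Fin n)
  tr : Fin k → Fin n → Fin w → Bool → Fin w
  start : Fin w
  acc : Finset (Fin w)

namespace KOBDD

def layerRun {k n w : ℕ} (M : KOBDD k n w) (t : Fin k) (s : Fin w) (x : Fin n → Bool) : Fin w :=
  (List.finRange n).foldl (fun a i => M.tr t i a (x (M.ord i))) s

def final {k n w : ℕ} (M : KOBDD k n w) (x : Fin n → Bool) : Fin w :=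
  (List.finRange k).foldl (fun s t => M.layerRun t s x) M.start

def Accepts {k n w : ℕ} (M : KOBDD k n w) (x : Fin n → Bool) : Prop :=
  M.final x ∈ M.acc

def Represents {k n w : ℕ} (M : KOBDD k n w) (f : (Fin n → Bool) → Bool) : Prop :=
  ∀ x, M.Accepts x ↔ f x = true

def RepresentsPartial {k n w : ℕ} (M : KOBDD k n w) (F : (Fin n → Bool) → Option Bool) : Prop :=
  ∀ x b, F x = some b → (M.Accepts x ↔ b = true)

/-- Each layer is a commutative OBDD: for every reading order `π`, the reordered layer
(with transitions `tr' i = tr (ord⁻¹(π i))`) computes, from every start state,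
the same state transformation as the original layer. -/
def Commutative {k n w : ℕ} (M : KOBDD k n w) : Prop :=
  ∀ (π : Equiv.Perm (Fin n)) (t : Fin k) (s : Fin w) (x : Fin n → Bool),
    (List.finRange n).foldl (fun a i => M.tr t (M.ord.symm (π i)) a (x (π i))) s =
      M.layerRun t s x

end KOBDD
lemma zIdx {q l : ℕ} (i : Fin q) (j : Fin l) : (i : ℕ) * l + (j : ℕ) < q * (l + 1) :=
  calc (i : ℕ) * l + (j : ℕ) < (i : ℕ) * l + l := Nat.add_lt_add_left j.isLt _
    _ = ((i : ℕ) + 1) * l := by ring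
    _ ≤ q * l := Nat.mul_le_mul i.isLt (Nat.le_refl l)
    _ ≤ q * (l + 1) := Nat.mul_le_mul (Nat.le_refl q) (Nat.le_succ l)

lemma yIdx {q l : ℕ} (i : Fin q) : q * l + (i : ℕ) < q * (l + 1) :=
  calc q * l + (i : ℕ) < q * l + q := Nat.add_lt_add_left i.isLt _
    _ = q * (l + 1) := by ring

/-- The bit `z_{i,j}` of an input to the reordered function
(layout: `z_{1,1},…,z_{q,l}, y_1,…,y_q`). -/
def zOf (q l : ℕ) (x : Fin (q * (l + 1)) → Bool) (i : Fin q) (j : Fin l) : Bool :=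
  x ⟨(i : ℕ) * l + (j : ℕ), zIdx i j⟩

/-- The value bit `y_i` of an input to the reordered function. -/
def yOf (q l : ℕ) (x : Fin (q * (l + 1)) → Bool) (i : Fin q) : Bool :=
  x ⟨q * l + (i : ℕ), yIdx i⟩

/-- `z_{1,j} ⊕ ⋯ ⊕ z_{i,j}`. -/
def xorZ (q l : ℕ) (x : Fin (q * (l + 1)) → Bool) (i : Fin q) (j : Fin l) : Bool :=
  decide ((Finset.univ.filter (fun i' : Fin q => i' ≤ i ∧ zOf q l x i' j = true)).card % 2 = 1)

/-- `θ(i) − 1` for the plain reordering. -/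
def addrOrd (q l : ℕ) (x : Fin (q * (l + 1)) → Bool) (i : Fin q) : ℕ :=
  binVal l (zOf q l x i)

/-- `θ(i) − 1` for the xor-reordering. -/
def addrXor (q l : ℕ) (x : Fin (q * (l + 1)) → Bool) (i : Fin q) : ℕ :=
  binVal l (xorZ q l x i)

/-- The partial reordered function: defined exactly when the addresses form a
permutation of `{1,…,q}`; then position `j` of `f`'s argument is `y_{θ⁻¹(j)}`. -/
noncomputable def ordPartial (q l : ℕ) (f : (Fin q → Bool) → Bool)
    (addr : (Fin (q * (l + 1)) → Bool) → Fin q → ℕ) :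
    (Fin (q * (l + 1)) → Bool) → Option Bool := fun x =>
  if h : ∃ σ : Equiv.Perm (Fin q), ∀ i, addr x i = (σ i : ℕ) then
    some (f fun j => yOf q l x (h.choose.symm j))
  else none

/-- The partial function `ord(f)`. -/
noncomputable def ordF (q : ℕ) (f : (Fin q → Bool) → Bool) :
    (Fin (q * (Nat.clog 2 q + 1)) → Bool) → Option Bool :=
  ordPartial q (Nat.clog 2 q) f (addrOrd q (Nat.clog 2 q))

/-- The partial function `⊕ord(f)`. -/
noncomputable def xorOrdF (q : ℕ) (f : (Fin q → Bool) → Bool) :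
    (Fin (q * (Nat.clog 2 q + 1)) → Bool) → Option Bool :=
  ordPartial q (Nat.clog 2 q) f (addrXor q (Nat.clog 2 q))
lemma blockIdx {m l b : ℕ} (hb : b < 2 * m) (j : Fin l) : b * l + (j : ℕ) < 2 * m * l :=
  calc b * l + (j : ℕ) < b * l + l := Nat.add_lt_add_left j.isLt _
    _ = (b + 1) * l := by ring
    _ ≤ 2 * m * l := Nat.mul_le_mul hb (Nat.le_refl l)

/-- Index of the block encoding `f^A(v)` (`side = false`) or `f^B(v)` (`side = true`). -/
def pjBlock (m : ℕ) (side : Bool) (v : ℕ) : ℕ :=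
  cond side (m + v % m) (v % m)

lemma pjBlock_lt {m : ℕ} (hm : 0 < m) (side : Bool) (v : ℕ) : pjBlock m side v < 2 * m := by
  have h := Nat.mod_lt v hm
  cases side with
  | false => exact lt_of_lt_of_le h (by omega)
  | true => exact lt_of_lt_of_eq (Nat.add_lt_add_left h m) (two_mul m).symm

/-- The value `f^A(v)` (`side = false`) or `f^B(v)` (`side = true`) encoded in the input. -/
def pjF (m : ℕ) (hm : 0 < m) (x : Fin (2 * m * Nat.clog 2 m) → Bool)
    (side : Bool) (v : ℕ) : ℕ :=
  binVal (Nat.clog 2 m) (fun j =>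
    x ⟨pjBlock m side v * Nat.clog 2 m + (j : ℕ), blockIdx (pjBlock_lt hm side v) j⟩) % m

/-- `v_j`: `v_0 = 0`, `v_{j+1} = f^A(v_j)` for even `j`, `v_{j+1} = f^B(v_j)` for odd `j`. -/
def pjV (m : ℕ) (hm : 0 < m) (x : Fin (2 * m * Nat.clog 2 m) → Bool) : ℕ → ℕ
  | 0 => 0
  | j + 1 => pjF m hm x (decide (j % 2 = 1)) (pjV m hm x j)

/-- The pointer jumping function `PJ_{k,m}`: the parity of the bits of `v_k`. -/
def PJ (k m : ℕ) (hm : 0 < m) (x : Fin (2 * m * Nat.clog 2 m) → Bool) : Bool :=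
  decide ((Nat.digits 2 (pjV m hm x k)).sum % 2 = 1)

/-- Invariant principle for folds over `List.finRange`. -/
theorem foldl_finRange_invariant {S : Type*} {n : ℕ} (P : ℕ → S → Prop) (f : S → Fin n → S)
    (s : S) (h0 : P 0 s) (hs : ∀ (i : Fin n) (s : S), P i s → P (i + 1) (f s i)) :
    P n ((List.finRange n).foldl f s) := by
  induction n with
  | zero => simpa using h0
  | succ n ih =>
    rw [List.finRange_succ_last, List.foldl_append, List.foldl_map]
    exact hs (Fin.last n) _ (ih (fun s i => f s i.castSucc) fun i s h => hs i.castSucc s h)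

/-- A fold over `Fin (a * b)` is a nested fold over blocks. -/
theorem foldl_finRange_mul {S : Type*} {a b : ℕ} (f : S → Fin (a * b) → S) (s : S) :
    (List.finRange (a * b)).foldl f s =
      (List.finRange a).foldl
        (fun s i => (List.finRange b).foldl (fun s j => f s (finProdFinEquiv (i, j))) s) s := by
  have h : List.finRange (a * b) =
      ((List.finRange a).map fun i =>
        (List.finRange b).map fun j => finProdFinEquiv (i, j)).flatten := by
    rw [← List.ofFn_id, List.ofFn_mul]
    simp only [List.ofFn_eq_map]
    congr 1
    refine List.map_congr_left fun i _ => List.map_congr_left fun j _ => ?_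
    ext
    simp [finProdFinEquiv]
    ring
  rw [h, List.foldl_flatten, List.foldl_map]
  simp only [List.foldl_map]

/-- A layered program over an arbitrary finite state type can be relabelled as a `KOBDD`. -/
theorem exists_KOBDD_of_fintype {k n : ℕ} {S : Type*} [Fintype S] (o : Equiv.Perm (Fin n))
    (tr : Fin k → Fin n → S → Bool → S) (s₀ : S) (A : S → Prop) :
    ∃ M : KOBDD k n (Fintype.card S), ∀ x, M.Accepts x ↔
      A ((List.finRange k).foldl
        (fun s t => (List.finRange n).foldl (fun a i => tr t i a (x (o i))) s) s₀) := by
  classical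
  let e := Fintype.equivFin S
  refine ⟨⟨o, fun t i s b => e (tr t i (e.symm s) b), e s₀,
    Finset.univ.filter fun s => A (e.symm s)⟩, fun x => ?_⟩
  have inner : ∀ (t : Fin k) (l : List (Fin n)) (s : S),
      l.foldl (fun a i => e (tr t i (e.symm a) (x (o i)))) (e s) =
        e (l.foldl (fun a i => tr t i a (x (o i))) s) := by
    intro t l
    induction l with
    | nil => intro s; rfl
    | cons i l ih => intro s; simp only [List.foldl_cons, Equiv.symm_apply_apply, ih]
  have outer : ∀ (l : List (Fin k)) (s : S),
      l.foldl (fun s t => (List.finRange n).foldl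
        (fun a i => e (tr t i (e.symm a) (x (o i)))) s) (e s) =
      e (l.foldl (fun s t => (List.finRange n).foldl (fun a i => tr t i a (x (o i))) s) s) := by
    intro l
    induction l with
    | nil => intro s; rfl
    | cons i l ih => intro s; simp only [List.foldl_cons, inner, ih]
  simp only [KOBDD.Accepts, KOBDD.final, KOBDD.layerRun, outer, Finset.mem_filter,
    Finset.mem_univ, true_and, Equiv.symm_apply_apply]

/-- Value of the first `j` bits of `z`, by Horner's rule. -/
def horner (z : ℕ → Bool) : ℕ → ℕ
  | 0 => 0
  | j + 1 => 2 * horner z j + (z j).toNat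

theorem horner_lt (z : ℕ → Bool) (j : ℕ) : horner z j < 2 ^ j := by
  induction j with
  | zero => simp [horner]
  | succ j ih =>
    have := (z j).toNat_lt
    rw [horner, pow_succ]
    omega

theorem binVal_eq_horner (z : ℕ → Bool) (L : ℕ) :
    binVal L (fun j => z j) = horner z L := by
  induction L with
  | zero => simp [binVal, horner]
  | succ L ih =>
    rw [horner, ← ih, binVal, binVal, Fin.sum_univ_castSucc, Finset.mul_sum]
    congr 1
    · refine Finset.sum_congr rfl fun j _ => ?_
      have hj := j.isLt
      have : L + 1 - 1 - (j : ℕ) = (L - 1 - j) + 1 := by omega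
      simp only [Fin.val_castSucc, this, pow_succ]
      split_ifs <;> ring
    · cases h : z L <;> simp [h]

/-- The position of the variable read at time `(i, j)`: first the address bits `z_{i,·}`,
then the value bit `y_i`. -/
def interleave (q L : ℕ) (p : Fin q × Fin (L + 1)) : Fin (q * (L + 1)) :=
  if h : (p.2 : ℕ) < L then ⟨p.1 * L + p.2, zIdx p.1 ⟨p.2, h⟩⟩ else ⟨q * L + p.1, yIdx p.1⟩

theorem interleave_injective (q L : ℕ) : Function.Injective (interleave q L) := by
  have key : ∀ (i i' : Fin q) (j j' : ℕ), j < L → j' < L →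
      (i : ℕ) * L + j = i' * L + j' → (i : ℕ) = i' ∧ j = j' := by
    intro i i' j j' hj hj' h
    have hL : 0 < L := by omega
    have h1 := congrArg (· / L) h
    have h2 := congrArg (· % L) h
    simp only [mul_comm _ L, Nat.mul_add_div hL, Nat.div_eq_of_lt hj, Nat.div_eq_of_lt hj',
      Nat.mul_add_mod, Nat.mod_eq_of_lt hj, Nat.mod_eq_of_lt hj'] at h1 h2
    exact ⟨by simpa using h1, h2⟩
  have lt : ∀ (i : Fin q) (j : ℕ), j < L → (i : ℕ) * L + j < q * L := by
    intro i j hj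
    have := Nat.mul_le_mul (Nat.succ_le_of_lt i.isLt) (Nat.le_refl L)
    rw [Nat.succ_mul] at this
    omega
  rintro ⟨i, j⟩ ⟨i', j'⟩ h
  have hj := j.isLt
  have hj' := j'.isLt
  simp only [interleave] at h
  split_ifs at h with h1 h2 h2 <;> simp only [Fin.mk.injEq] at h
  · obtain ⟨ha, hb⟩ := key i i' j j' h1 h2 h
    exact Prod.ext (Fin.ext ha) (Fin.ext hb)
  · have := lt i j h1
    omega
  · have := lt i' j' h2
    omega
  · exact Prod.ext (Fin.ext (by dsimp only; omega)) (Fin.ext (by dsimp only; omega))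

/-- The reading order underlying `interleave`. -/
noncomputable def interleavePerm (q L : ℕ) : Equiv.Perm (Fin (q * (L + 1))) :=
  finProdFinEquiv.symm.trans (Equiv.ofBijective (interleave q L)
    ((Fintype.bijective_iff_injective_and_card _).2 ⟨interleave_injective q L, by simp⟩))

theorem interleavePerm_castSucc {q L : ℕ} (x : Fin (q * (L + 1)) → Bool) (i : Fin q)
    (j : Fin L) :
    x (interleavePerm q L (finProdFinEquiv (i, j.castSucc))) = zOf q L x i j := by
  simp [interleavePerm, interleave, zOf]

theorem interleavePerm_last {q L : ℕ} (x : Fin (q * (L + 1)) → Bool) (i : Fin q) :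
    x (interleavePerm q L (finProdFinEquiv (i, Fin.last L))) = yOf q L x i := by
  simp [interleavePerm, interleave, yOf]

/-- Contribution of the bit `y` at position `a` to the value of the block number `b`
of length `l`. -/
def blockContrib (l b a : ℕ) (y : Bool) : ℕ :=
  if y = true ∧ a / l = b then 2 ^ (l - 1 - a % l) else 0

theorem sum_blockContrib {B l b : ℕ} (hb : b < B) (w : Fin (B * l) → Bool) :
    ∑ p : Fin (B * l), blockContrib l b p (w p) =
      binVal l (fun j => w (finProdFinEquiv (⟨b, hb⟩, j))) := by
  rw [← finProdFinEquiv.sum_comp, Fintype.sum_prod_type]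
  have hval : ∀ (b' : Fin B) (j : Fin l),
      ((finProdFinEquiv (b', j) : Fin (B * l)) : ℕ) / l = b' ∧
      ((finProdFinEquiv (b', j) : Fin (B * l)) : ℕ) % l = j := by
    intro b' j
    have hl : 0 < l := j.pos
    simp [Nat.add_mul_div_left _ _ hl, Nat.div_eq_of_lt j.isLt, Nat.mod_eq_of_lt j.isLt]
  rw [Finset.sum_eq_single ⟨b, hb⟩]
  · simp only [blockContrib, binVal, (hval _ _).1, (hval _ _).2, and_true]
  · intro b' _ hne
    refine Finset.sum_eq_zero fun j _ => ?_
    rw [blockContrib, if_neg]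
    rintro ⟨-, h⟩
    exact hne (Fin.ext ((hval b' j).1.symm.trans h))
  · simp

/-- States: the current pointer, an accumulator for the next pointer, and the prefix of the
address being read. -/
abbrev PJState (m L : ℕ) : Type := Fin m × Fin m × Fin (2 ^ L)

/-- The transition at time `(i, j)` of a layer following the pointer `v` to block `b v`. -/
def pointerStep {m : ℕ} (hm : 0 < m) (l : ℕ) (b : ℕ → ℕ) {q L : ℕ} (p : Fin q × Fin (L + 1))
    (s : PJState m L) (x : Bool) : PJState m L :=
  if (p.2 : ℕ) < L then
    (s.1, s.2.1, ⟨(2 * s.2.2 + x.toNat) % 2 ^ L, Nat.mod_lt _ (Nat.two_pow_pos L)⟩)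
  else
    let acc : Fin m := ⟨(s.2.1 + blockContrib l (b s.1) s.2.2 x) % m, Nat.mod_lt _ hm⟩
    if (p.1 : ℕ) + 1 = q then (acc, ⟨0, hm⟩, ⟨0, Nat.two_pow_pos L⟩)
    else (s.1, acc, ⟨0, Nat.two_pow_pos L⟩)

/-- Reading `z_{i,·}` and `y_i` adds the contribution of `y_i`. -/
theorem foldl_pointerStep_block {m : ℕ} (hm : 0 < m) (l : ℕ) (b : ℕ → ℕ) {q L : ℕ}
    (x : Fin (q * (L + 1)) → Bool) (i : Fin q) (v a : Fin m) :
    (List.finRange (L + 1)).foldl (fun s j => pointerStep hm l b (i, j) s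
        (x (interleavePerm q L (finProdFinEquiv (i, j))))) (v, a, ⟨0, Nat.two_pow_pos L⟩) =
      let acc : Fin m :=
        ⟨(a + blockContrib l (b v) (addrOrd q L x i) (yOf q L x i)) % m, Nat.mod_lt _ hm⟩
      if (i : ℕ) + 1 = q then (acc, ⟨0, hm⟩, ⟨0, Nat.two_pow_pos L⟩)
      else (v, acc, ⟨0, Nat.two_pow_pos L⟩) := by
  rw [List.finRange_succ_last, List.foldl_append, List.foldl_map]
  let z : ℕ → Bool := fun j => if h : j < L then zOf q L x i ⟨j, h⟩ else false
  have hz : ∀ j : Fin L, z j = zOf q L x i j := fun j => by simp [z]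
  have haddr : addrOrd q L x i = horner z L := by
    rw [← binVal_eq_horner, addrOrd]
    simp only [hz]
  have hread := foldl_finRange_invariant
    (fun j s => s.1 = v ∧ s.2.1 = a ∧ (s.2.2 : ℕ) = horner z j)
    (fun (s : PJState m L) (j : Fin L) => pointerStep hm l b (i, j.castSucc) s
        (x (interleavePerm q L (finProdFinEquiv (i, j.castSucc)))))
    (v, a, ⟨0, Nat.two_pow_pos L⟩) ⟨rfl, rfl, rfl⟩ (by
      rintro j s ⟨h1, h2, h3⟩
      have hlt : horner z (j + 1) < 2 ^ L :=
        (horner_lt z _).trans_le (Nat.pow_le_pow_right two_pos j.isLt)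
      rw [horner, hz] at hlt
      rw [interleavePerm_castSucc x i j]
      simp only [pointerStep, Fin.val_castSucc, j.isLt, if_true]
      refine ⟨h1, h2, ?_⟩
      rw [h3, horner, hz, Nat.mod_eq_of_lt hlt])
  rw [List.foldl_cons, List.foldl_nil, interleavePerm_last x i]
  generalize List.foldl _ _ (List.finRange L) = s at hread ⊢
  obtain ⟨h1, h2, h3⟩ := hread
  simp only [pointerStep, Fin.val_last, lt_irrefl, if_false, h1, h2, h3, haddr]

/-- A layer replaces the pointer by the total contribution. -/
theorem foldl_pointerStep {m : ℕ} (hm : 0 < m) (l : ℕ) (b : ℕ → ℕ) {q L : ℕ} (hq : 0 < q)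
    (x : Fin (q * (L + 1)) → Bool) (v : Fin m) :
    (List.finRange (q * (L + 1))).foldl (fun s p => pointerStep hm l b (finProdFinEquiv.symm p) s
        (x (interleavePerm q L p))) (v, ⟨0, hm⟩, ⟨0, Nat.two_pow_pos L⟩) =
      (⟨(∑ i, blockContrib l (b v) (addrOrd q L x i) (yOf q L x i)) % m, Nat.mod_lt _ hm⟩,
        ⟨0, hm⟩, ⟨0, Nat.two_pow_pos L⟩) := by
  rw [foldl_finRange_mul]
  simp only [Equiv.symm_apply_apply]
  let C : ℕ → ℕ := fun i =>
    if h : i < q then blockContrib l (b v) (addrOrd q L x ⟨i, h⟩) (yOf q L x ⟨i, h⟩) else 0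
  have hC : ∀ i : Fin q, C i = blockContrib l (b v) (addrOrd q L x i) (yOf q L x i) :=
    fun i => by simp [C]
  have hsum : ∑ i, blockContrib l (b v) (addrOrd q L x i) (yOf q L x i) =
      ∑ i ∈ Finset.range q, C i := by
    rw [← Fin.sum_univ_eq_sum_range]
    simp only [hC]
  have := foldl_finRange_invariant
    (fun i s => s =
      let acc : Fin m := ⟨(∑ i ∈ Finset.range i, C i) % m, Nat.mod_lt _ hm⟩
      if i = q then (acc, ⟨0, hm⟩, ⟨0, Nat.two_pow_pos L⟩)
      else (v, acc, ⟨0, Nat.two_pow_pos L⟩))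
    (fun (s : PJState m L) (i : Fin q) => (List.finRange (L + 1)).foldl
      (fun s j => pointerStep hm l b (i, j) s
        (x (interleavePerm q L (finProdFinEquiv (i, j))))) s)
    (v, ⟨0, hm⟩, ⟨0, Nat.two_pow_pos L⟩) (by simp [hq.ne]) (by
      rintro i s rfl
      simp only [i.isLt.ne, if_false, foldl_pointerStep_block, ← hC, Finset.sum_range_succ,
        Nat.mod_add_mod])
  simpa only [if_true, hsum] using this

/-- On the domain of the reordering, the total contribution is the next pointer. -/
theorem sum_blockContrib_mod_eq_pjF {m : ℕ} (hm : 0 < m) {L : ℕ}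
    (x : Fin (2 * m * Nat.clog 2 m * (L + 1)) → Bool)
    (σ : Equiv.Perm (Fin (2 * m * Nat.clog 2 m)))
    (hσ : ∀ i, addrOrd (2 * m * Nat.clog 2 m) L x i = (σ i : ℕ)) (side : Bool) (v : ℕ) :
    (∑ i, blockContrib (Nat.clog 2 m) (pjBlock m side v)
        (addrOrd (2 * m * Nat.clog 2 m) L x i) (yOf (2 * m * Nat.clog 2 m) L x i)) % m =
      pjF m hm (fun j => yOf (2 * m * Nat.clog 2 m) L x (σ.symm j)) side v := by
  rw [← σ.symm.sum_comp]
  simp only [hσ, Equiv.apply_symm_apply]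
  rw [sum_blockContrib (pjBlock_lt hm side v)
    (fun j => yOf (2 * m * Nat.clog 2 m) L x (σ.symm j)), pjF]
  congr 3
  funext j
  congr 2
  ext
  simp [add_comm, mul_comm]

/-- a total extension of `ord(PJ_{2k−1,m})` has a deterministic
2kOBDD of width `O(m²·n)`. -/
theorem stmt18 :
    ∃ c : ℕ, 0 < c ∧
      ∀ k m : ℕ, 1 ≤ k → ∀ hm : 2 ≤ m,
        ∃ g : (Fin (2 * m * Nat.clog 2 m * (Nat.clog 2 (2 * m * Nat.clog 2 m) + 1)) → Bool)
            → Bool,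
          (∀ x b, ordF (2 * m * Nat.clog 2 m) (PJ (2 * k - 1) m (by omega)) x = some b →
              g x = b) ∧
          ∃ W : ℕ, W ≤ c * m ^ 2 * (2 * m * Nat.clog 2 m) ∧
            ∃ M : KOBDD (2 * k)
                (2 * m * Nat.clog 2 m * (Nat.clog 2 (2 * m * Nat.clog 2 m) + 1)) W,
              M.Represents g := by
  classical
  refine ⟨2, two_pos, fun k m hk hm => ?_⟩
  have hm0 : 0 < m := by omega
  have hl : 0 < Nat.clog 2 m := Nat.clog_pos one_lt_two hm
  have hq : 1 < 2 * m * Nat.clog 2 m := by nlinarith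
  have hpow : 2 ^ Nat.clog 2 (2 * m * Nat.clog 2 m) ≤ 2 * (2 * m * Nat.clog 2 m) := by
    have hpos := Nat.clog_pos one_lt_two hq
    have hlt := Nat.pow_pred_clog_lt_self one_lt_two hq
    obtain ⟨r, hr⟩ := Nat.exists_eq_succ_of_ne_zero hpos.ne'
    rw [hr] at hlt ⊢
    rw [Nat.pred_succ] at hlt
    rw [pow_succ]
    omega
  unfold ordF
  generalize Nat.clog 2 (2 * m * Nat.clog 2 m) = L at hpow ⊢
  obtain ⟨M, hM⟩ := exists_KOBDD_of_fintype (k := 2 * k)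
    (interleavePerm (2 * m * Nat.clog 2 m) L)
    (fun t p s y => if (t : ℕ) < 2 * k - 1 then
      pointerStep hm0 (Nat.clog 2 m) (pjBlock m (decide ((t : ℕ) % 2 = 1)))
        (finProdFinEquiv.symm p) s y else s)
    (⟨0, hm0⟩, ⟨0, hm0⟩, ⟨0, Nat.two_pow_pos L⟩)
    (fun s : PJState m L => (Nat.digits 2 (s.1 : ℕ)).sum % 2 = 1)
  refine ⟨fun x => decide (M.Accepts x), fun x b hx => ?_, _, ?_, M, fun x => by simp⟩
  · simp only [ordPartial] at hx
    split_ifs at hx with h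
    rw [Option.some.injEq] at hx
    have hσ := h.choose_spec
    generalize h.choose = σ at hσ hx
    rw [← hx, PJ, decide_eq_decide, hM]
    have hrun := foldl_finRange_invariant
      (fun t s => (s.1 : ℕ) = pjV m hm0
          (fun j => yOf (2 * m * Nat.clog 2 m) L x (σ.symm j)) (min t (2 * k - 1)) ∧
        s.2 = (⟨0, hm0⟩, ⟨0, Nat.two_pow_pos L⟩))
      (fun (s : PJState m L) (t : Fin (2 * k)) =>
        (List.finRange (2 * m * Nat.clog 2 m * (L + 1))).foldl
          (fun s p => if (t : ℕ) < 2 * k - 1 then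
            pointerStep hm0 (Nat.clog 2 m) (pjBlock m (decide ((t : ℕ) % 2 = 1)))
              (finProdFinEquiv.symm p) s (x (interleavePerm (2 * m * Nat.clog 2 m) L p))
            else s) s)
      (⟨0, hm0⟩, ⟨0, hm0⟩, ⟨0, Nat.two_pow_pos L⟩) ⟨by simp [pjV], rfl⟩ (by
        rintro t ⟨v, r⟩ ⟨h1, rfl⟩
        by_cases ht : (t : ℕ) < 2 * k - 1
        · simp only [ht, if_true]
          rw [foldl_pointerStep hm0 _ _ (by omega)]
          refine ⟨?_, rfl⟩
          rw [min_eq_left ht.le] at h1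
          rw [min_eq_left (by omega), pjV, ← h1]
          exact sum_blockContrib_mod_eq_pjF hm0 x σ hσ _ _
        · simp only [ht, if_false, List.foldl_const, Function.iterate_fixed]
          refine ⟨?_, trivial⟩
          rw [min_eq_right (by omega)] at h1 ⊢
          exact h1)
    rw [min_eq_right (by omega)] at hrun
    rw [hrun.1]
  · simp only [Fintype.card_prod, Fintype.card_fin]
    nlinarith [Nat.mul_le_mul_left (m * m) hpow]
end
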